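/- Let C₁ = ⟨U₁,U₂⟩ and C₂ = ⟨V₁,V₂⟩ be disjoint maximal commuting classes in U^{(p²)} generated by independent commuting pairs, with U₁V₁ = V₁U₁, U₂V₂ = V₂U₂, U₂V₁ ≠ V₁U₂, and U₁V₂ = α V₂U₁ where α ≠ 1 is a p-th root of unity. Then there exists an element U₂′ ∈ C₁, independent of U₁ and with C₁ = ⟨U₁, U₂′⟩, such that U₂′V₁ = α V₁U₂′. -/

import Mathlib

/-!
Up to powers of `ω` the Pauli operators form an elementary abelian group of exponent `p`: products
and powers of elements of `PauliSet p` stay in it up to such a phase (`IsPauli.mul`, `IsPauli.pow`,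
`IsPauli.pow_p`), and an element of `PauliSet p` is determined by its phase class
(`PhaseEq.eq_of_mem`). This makes the choices behind `circ` and `cpow` canonical.

Any two Pauli operators commute up to a power of `ω`, so `U₂V₁ = βV₁U₂` with `β` a `p`-th root of
unity; `β ≠ 1` since they do not commute, hence `β` is primitive (`p` is prime) and `α = β ^ t` for
some `t`, which is nonzero mod `p` because `α ≠ 1`. The required element is `U₂' = U₂^{∘t}`:
`U₂' V₁ = β ^ t V₁ U₂'`, and as `l ↦ t l` is a bijection of `ZMod p`, replacing `U₂` by `U₂'` changes
neither the generated class nor independence (`genClass_cpow`, `Indep.cpow_right`).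
-/

open Matrix
open scoped Kronecker

noncomputable section

/-- ω = exp(2πi/p), a primitive p-th root of unity. -/
def omega_p (p : ℕ) : ℂ := Complex.exp (2 * Real.pi * Complex.I / p)

/-- Generalized Pauli X on ℂ^p : X e_j = e_{j+1}. -/
def genX (p : ℕ) : Matrix (ZMod p) (ZMod p) ℂ :=
  Matrix.of fun i j => if i = j + 1 then 1 else 0

/-- Generalized Pauli Z on ℂ^p : Z e_j = ω^j e_j. -/
def genZ (p : ℕ) : Matrix (ZMod p) (ZMod p) ℂ :=
  Matrix.of fun i j => if i = j then omega_p p ^ j.val else 0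

/-- The space of p² × p² complex matrices. -/
abbrev PauliMat (p : ℕ) := Matrix (ZMod p × ZMod p) (ZMod p × ZMod p) ℂ

/-- The set U^{(p²)} of p⁴ two-particle generalized Pauli operators
    (X^m Z^n) ⊗ (X^k Z^l), with m,n,k,l ∈ {0,…,p−1}. -/
def PauliSet (p : ℕ) [NeZero p] : Set (PauliMat p) :=
  { U | ∃ m n k l : ZMod p,
      U = (genX p ^ m.val * genZ p ^ n.val) ⊗ₖ (genX p ^ k.val * genZ p ^ l.val) }

/-- A maximal commuting class: a subset of U^{(p²)} \ {I} of cardinality p² − 1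
    whose elements pairwise commute. -/
def MaxCommClass (p : ℕ) [NeZero p] (C : Set (PauliMat p)) : Prop :=
  C ⊆ PauliSet p \ {1} ∧ C.ncard = p ^ 2 - 1 ∧ ∀ U ∈ C, ∀ V ∈ C, Commute U V

/-- U ∘ V: the unique element of U^{(p²)} such that U·V is a power of ω times it. -/
def circ (p : ℕ) [NeZero p] (U V : PauliMat p) : PauliMat p :=
  @Classical.epsilon _ ⟨(0 : PauliMat p)⟩
    fun W => W ∈ PauliSet p ∧ ∃ j : ℕ, U * V = omega_p p ^ j • W

/-- U^{∘k}: the unique element of U^{(p²)} such that the matrix power U^k is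
    a power of ω times it. -/
def cpow (p : ℕ) [NeZero p] (U : PauliMat p) (k : ZMod p) : PauliMat p :=
  @Classical.epsilon _ ⟨(0 : PauliMat p)⟩
    fun W => W ∈ PauliSet p ∧ ∃ j : ℕ, U ^ k.val = omega_p p ^ j • W

/-- Independence: U^k is not a scalar multiple of V^l for any (k,l) ≠ (0,0). -/
def Indep (p : ℕ) [NeZero p] (U V : PauliMat p) : Prop :=
  ∀ k l : ZMod p, (k, l) ≠ (0, 0) → ∀ c : ℂ, U ^ k.val ≠ c • V ^ l.val

/-- The class ⟨U,V⟩ generated by a pair of independent commuting operators: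
    {U^{∘k} ∘ V^{∘l} : (k,l) ≠ (0,0)}. -/
def genClass (p : ℕ) [NeZero p] (U V : PauliMat p) : Set (PauliMat p) :=
  { W | ∃ k l : ZMod p, (k, l) ≠ (0, 0) ∧ W = circ p (cpow p U k) (cpow p V l) }

/-- A complete set of p² + 1 pairwise disjoint maximal commuting classes. -/
def CompleteSet (p : ℕ) [NeZero p] (S : Set (Set (PauliMat p))) : Prop :=
  S.ncard = p ^ 2 + 1 ∧ (∀ C ∈ S, MaxCommClass p C) ∧ S.Pairwise Disjoint

/-- A family of classes is unextendible if no maximal commuting class is contained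
    in U^{(p²)} \ ({I} ∪ ⋃ F). -/
def Unextendible (p : ℕ) [NeZero p] (F : Set (Set (PauliMat p))) : Prop :=
  ¬ ∃ C : Set (PauliMat p), MaxCommClass p C ∧ C ⊆ PauliSet p \ ({1} ∪ ⋃₀ F)

/-! ### Equality up to a phase -/

/-- Equality of matrices up to a phase that is a power of `ω`. -/
def PhaseEq {n : Type*} (p : ℕ) (A B : Matrix n n ℂ) : Prop :=
  ∃ j : ℕ, A = omega_p p ^ j • B

/-- The operator `(X^a Z^b) ⊗ (X^c Z^d)`, with natural-number exponents not reduced mod `p`. -/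
def pauli (p : ℕ) [NeZero p] (a b c d : ℕ) : PauliMat p :=
  (genX p ^ a * genZ p ^ b) ⊗ₖ (genX p ^ c * genZ p ^ d)

/-- A Pauli operator up to a power of `ω`. -/
def IsPauli (p : ℕ) [NeZero p] (A : PauliMat p) : Prop :=
  ∃ W ∈ PauliSet p, PhaseEq p A W

lemma omega_prim (p : ℕ) [NeZero p] : IsPrimitiveRoot (omega_p p) p :=
  Complex.isPrimitiveRoot_exp p (NeZero.ne p)

namespace PhaseEq

variable {n : Type*} {p : ℕ} {A B C D : Matrix n n ℂ}

lemma refl (A : Matrix n n ℂ) : PhaseEq p A A := ⟨0, by simp⟩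

lemma trans (h : PhaseEq p A B) (h' : PhaseEq p B C) : PhaseEq p A C := by
  obtain ⟨i, rfl⟩ := h
  obtain ⟨j, rfl⟩ := h'
  exact ⟨i + j, by rw [smul_smul, pow_add]⟩

lemma symm [NeZero p] (h : PhaseEq p A B) : PhaseEq p B A := by
  obtain ⟨i, rfl⟩ := h
  -- `ω ^ (i * (p - 1))` is the inverse of `ω ^ i`.
  refine ⟨i * (p - 1), ?_⟩
  have hp : i * (p - 1) + i = p * i := by
    obtain ⟨q, hq⟩ := Nat.exists_eq_succ_of_ne_zero (NeZero.ne p)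
    subst hq
    simp only [Nat.succ_eq_add_one, Nat.add_sub_cancel]
    ring
  rw [smul_smul, ← pow_add, hp, pow_mul, (omega_prim p).pow_eq_one, one_pow, one_smul]

lemma mul [Fintype n] (h : PhaseEq p A B) (h' : PhaseEq p C D) :
    PhaseEq p (A * C) (B * D) := by
  obtain ⟨i, rfl⟩ := h
  obtain ⟨j, rfl⟩ := h'
  exact ⟨i + j, by rw [smul_mul_smul_comm, pow_add]⟩

lemma pow [Fintype n] [DecidableEq n] (h : PhaseEq p A B) (k : ℕ) :
    PhaseEq p (A ^ k) (B ^ k) := by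
  obtain ⟨i, rfl⟩ := h
  exact ⟨i * k, by rw [smul_pow, pow_mul]⟩

lemma kron {A B C D : Matrix n n ℂ} (h : PhaseEq p A B) (h' : PhaseEq p C D) :
    PhaseEq p (A ⊗ₖ C) (B ⊗ₖ D) := by
  obtain ⟨i, rfl⟩ := h
  obtain ⟨j, rfl⟩ := h'
  exact ⟨i + j, by rw [Matrix.smul_kronecker, Matrix.kronecker_smul, smul_smul, pow_add]⟩

end PhaseEq

/-! ### The Weyl relations -/

lemma genX_pow_apply (p : ℕ) [NeZero p] (a : ℕ) (i j : ZMod p) :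
    (genX p ^ a) i j = if i = j + a then 1 else 0 := by
  induction a generalizing j with
  | zero => simp [Matrix.one_apply]
  | succ a ih =>
    rw [pow_succ, Matrix.mul_apply, Finset.sum_eq_single (j + 1)]
    · rw [ih]
      have e : j + 1 + (a : ZMod p) = j + ((a + 1 : ℕ) : ZMod p) := by push_cast; ring
      simp [genX, e]
    · intro b _ hb
      simp [genX, hb]
    · simp

lemma genZ_eq (p : ℕ) : genZ p = Matrix.diagonal fun j => omega_p p ^ j.val := by
  ext i j
  by_cases h : i = j <;> simp [genZ, h]

lemma genX_pow_p (p : ℕ) [NeZero p] : genX p ^ p = 1 := by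
  ext i j
  simp [genX_pow_apply, Matrix.one_apply]

lemma genZ_pow_p (p : ℕ) [NeZero p] : genZ p ^ p = 1 := by
  rw [genZ_eq, Matrix.diagonal_pow, ← Matrix.diagonal_one]
  congr 1
  ext j
  simp only [Pi.pow_apply]
  rw [← pow_mul, mul_comm, pow_mul, (omega_prim p).pow_eq_one, one_pow]

lemma genZ_mul_genX (p : ℕ) [NeZero p] : genZ p * genX p = omega_p p • (genX p * genZ p) := by
  rw [genZ_eq]
  ext i j
  rw [Matrix.diagonal_mul, Matrix.smul_apply, Matrix.mul_diagonal]
  by_cases h : i = j + 1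
  · subst h
    have hm : (j + 1).val ≡ j.val + 1 [MOD p] := by
      rw [← ZMod.natCast_eq_natCast_iff]
      simp
    have : omega_p p ^ (j + 1).val = omega_p p ^ (j.val + 1) := by
      rw [pow_eq_pow_mod _ (omega_prim p).pow_eq_one, hm, ← pow_eq_pow_mod _ (omega_prim p).pow_eq_one]
    simp [genX, this, pow_succ, mul_comm]
  · simp [genX, h]

lemma genZ_pow_mul_genX_pow (p : ℕ) [NeZero p] (a b : ℕ) :
    PhaseEq p (genZ p ^ b * genX p ^ a) (genX p ^ a * genZ p ^ b) := by
  have h1 : ∀ b, PhaseEq p (genZ p ^ b * genX p) (genX p * genZ p ^ b) := by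
    intro b
    induction b with
    | zero => simpa using PhaseEq.refl _
    | succ b ih =>
      rw [pow_succ, mul_assoc, ← mul_assoc (genX p)]
      refine PhaseEq.trans (B := genZ p ^ b * genX p * genZ p) ?_ (ih.mul (.refl _))
      rw [mul_assoc]
      exact (PhaseEq.refl _).mul ⟨1, by rw [pow_one, genZ_mul_genX]⟩
  induction a with
  | zero => simpa using PhaseEq.refl _
  | succ a ih =>
    rw [pow_succ, ← mul_assoc]
    refine (ih.mul (.refl _)).trans ?_
    rw [mul_assoc, mul_assoc]
    exact (PhaseEq.refl _).mul (h1 b)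

lemma weyl_mul (p : ℕ) [NeZero p] (a b a' b' : ℕ) :
    PhaseEq p ((genX p ^ a * genZ p ^ b) * (genX p ^ a' * genZ p ^ b'))
      (genX p ^ (a + a') * genZ p ^ (b + b')) := by
  have h := ((PhaseEq.refl (genX p ^ a)).mul (genZ_pow_mul_genX_pow p a' b)).mul
    (.refl (genZ p ^ b'))
  simpa only [pow_add, mul_assoc] using h

lemma pauli_mul (p : ℕ) [NeZero p] (a b c d a' b' c' d' : ℕ) :
    PhaseEq p (pauli p a b c d * pauli p a' b' c' d')
      (pauli p (a + a') (b + b') (c + c') (d + d')) := by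
  unfold pauli
  rw [← Matrix.mul_kronecker_mul]
  exact (weyl_mul p a b a' b').kron (weyl_mul p c d c' d')

lemma pauli_pow (p : ℕ) [NeZero p] (a b c d k : ℕ) :
    PhaseEq p (pauli p a b c d ^ k) (pauli p (k * a) (k * b) (k * c) (k * d)) := by
  induction k with
  | zero => simpa [pauli] using PhaseEq.refl _
  | succ k ih =>
    rw [pow_succ]
    simp only [Nat.succ_mul]
    exact (ih.mul (.refl _)).trans (pauli_mul ..)

lemma pauli_mem (p : ℕ) [NeZero p] (a b c d : ℕ) : pauli p a b c d ∈ PauliSet p := by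
  have hX : ∀ a : ℕ, genX p ^ (a : ZMod p).val = genX p ^ a := fun a => by
    rw [ZMod.val_natCast, ← pow_eq_pow_mod a (genX_pow_p p)]
  have hZ : ∀ a : ℕ, genZ p ^ (a : ZMod p).val = genZ p ^ a := fun a => by
    rw [ZMod.val_natCast, ← pow_eq_pow_mod a (genZ_pow_p p)]
  exact ⟨a, b, c, d, by rw [hX, hX, hZ, hZ, pauli]⟩

/-! ### Pauli operators up to phase, and the operations `circ` and `cpow` -/

section

variable {p : ℕ} [NeZero p] {U V W A B : PauliMat p}

lemma exists_pauli (hU : U ∈ PauliSet p) : ∃ a b c d, U = pauli p a b c d := by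
  obtain ⟨a, b, c, d, h⟩ := hU
  exact ⟨_, _, _, _, h⟩

lemma IsPauli.of_mem (hU : U ∈ PauliSet p) : IsPauli p U := ⟨U, hU, .refl _⟩

lemma IsPauli.mul (hA : IsPauli p A) (hB : IsPauli p B) : IsPauli p (A * B) := by
  obtain ⟨U, hU, h⟩ := hA
  obtain ⟨V, hV, h'⟩ := hB
  obtain ⟨a, b, c, d, rfl⟩ := exists_pauli hU
  obtain ⟨a', b', c', d', rfl⟩ := exists_pauli hV
  exact ⟨_, pauli_mem .., (h.mul h').trans (pauli_mul ..)⟩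

lemma IsPauli.pow (hA : IsPauli p A) (k : ℕ) : IsPauli p (A ^ k) := by
  obtain ⟨U, hU, h⟩ := hA
  obtain ⟨a, b, c, d, rfl⟩ := exists_pauli hU
  exact ⟨_, pauli_mem .., (h.pow k).trans (pauli_pow ..)⟩

lemma IsPauli.pow_p (hA : IsPauli p A) : PhaseEq p (A ^ p) 1 := by
  obtain ⟨U, hU, h⟩ := hA
  obtain ⟨a, b, c, d, rfl⟩ := exists_pauli hU
  refine ((h.pow p).trans (pauli_pow ..)).trans ?_
  simpa [pauli, pow_mul, genX_pow_p, genZ_pow_p] using PhaseEq.refl _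

lemma IsPauli.pow_mod (hA : IsPauli p A) (k : ℕ) : PhaseEq p (A ^ k) (A ^ (k % p)) := by
  have h := ((hA.pow_p.pow (k / p)).mul (.refl (A ^ (k % p))))
  rwa [← pow_mul, ← pow_add, Nat.div_add_mod, one_pow, one_mul] at h

lemma phaseEq_comm (hU : U ∈ PauliSet p) (hV : V ∈ PauliSet p) :
    PhaseEq p (U * V) (V * U) := by
  obtain ⟨a, b, c, d, rfl⟩ := exists_pauli hU
  obtain ⟨a', b', c', d', rfl⟩ := exists_pauli hV
  refine (pauli_mul ..).trans ?_
  rw [add_comm a, add_comm b, add_comm c, add_comm d]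
  exact (pauli_mul ..).symm

lemma pauli_col_zero (a b c d : ℕ) (r : ZMod p × ZMod p) :
    pauli p a b c d r (0, 0) = if r = ((a : ZMod p), (c : ZMod p)) then 1 else 0 := by
  obtain ⟨r, s⟩ := r
  by_cases h : r = a <;>
    simp [pauli, genZ_eq, Matrix.diagonal_pow, genX_pow_apply, h]

/-- Elements of `PauliSet p` are normalised: the only nonzero entry of the column `(0, 0)` is `1`.
So two of them that agree up to a phase are equal. -/
lemma PhaseEq.eq_of_mem (h : PhaseEq p U V) (hU : U ∈ PauliSet p) (hV : V ∈ PauliSet p) :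
    U = V := by
  obtain ⟨a, b, c, d, rfl⟩ := exists_pauli hU
  obtain ⟨a', b', c', d', rfl⟩ := exists_pauli hV
  obtain ⟨j, hj⟩ := h
  have h0 := congrFun (congrFun hj ((a : ZMod p), (c : ZMod p))) (0, 0)
  rw [Matrix.smul_apply, pauli_col_zero, pauli_col_zero, if_pos rfl] at h0
  split_ifs at h0 with h1
  · rw [smul_eq_mul, mul_one] at h0
    rw [hj, ← h0, one_smul]
  · simp at h0

lemma circ_spec (hU : IsPauli p U) (hV : IsPauli p V) :
    circ p U V ∈ PauliSet p ∧ PhaseEq p (U * V) (circ p U V) :=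
  Classical.epsilon_spec (p := fun W => W ∈ PauliSet p ∧ ∃ j : ℕ, U * V = omega_p p ^ j • W)
    (hU.mul hV)

lemma cpow_spec (hU : IsPauli p U) (k : ZMod p) :
    cpow p U k ∈ PauliSet p ∧ PhaseEq p (U ^ k.val) (cpow p U k) :=
  Classical.epsilon_spec (p := fun W => W ∈ PauliSet p ∧ ∃ j : ℕ, U ^ k.val = omega_p p ^ j • W)
    (hU.pow k.val)

lemma cpow_pow (hU : IsPauli p U) (t l : ZMod p) :
    PhaseEq p (cpow p U t ^ l.val) (U ^ (t * l).val) := by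
  refine ((cpow_spec hU t).2.symm.pow l.val).trans ?_
  rw [← pow_mul, ZMod.val_mul]
  exact hU.pow_mod _

lemma cpow_cpow (hU : IsPauli p U) (t l : ZMod p) :
    cpow p (cpow p U t) l = cpow p U (t * l) := by
  have h := cpow_spec (.of_mem (cpow_spec hU t).1) l
  have h' := cpow_spec hU (t * l)
  exact (h.2.symm.trans ((cpow_pow hU t l).trans h'.2)).eq_of_mem h.1 h'.1

lemma circ_cpow_zero (hU : IsPauli p U) (hV : V ∈ PauliSet p) :
    circ p (cpow p U 0) V = V := by
  have h0 := cpow_spec hU 0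
  have h := circ_spec (.of_mem h0.1) (.of_mem hV)
  refine PhaseEq.eq_of_mem (h.2.symm.trans ?_) h.1 hV
  have h1 := h0.2.symm.mul (.refl V)
  rwa [ZMod.val_zero, pow_zero, one_mul] at h1

/-! ### Replacing a generator by a nonzero power -/

lemma genClass_cpow [Fact p.Prime] (hV : IsPauli p V) {t : ZMod p} (ht : t ≠ 0) :
    genClass p U (cpow p V t) = genClass p U V := by
  ext W
  constructor
  · rintro ⟨k, l, hkl, rfl⟩
    refine ⟨k, t * l, ?_, by rw [cpow_cpow hV]⟩
    simpa [ht] using hkl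
  · rintro ⟨k, l, hkl, rfl⟩
    refine ⟨k, t⁻¹ * l, ?_, by rw [cpow_cpow hV, mul_inv_cancel_left₀ ht]⟩
    simpa [ht] using hkl

lemma Indep.cpow_right [Fact p.Prime] (h : Indep p U V) (hV : IsPauli p V) {t : ZMod p}
    (ht : t ≠ 0) : Indep p U (cpow p V t) := by
  intro k l hkl c hc
  obtain ⟨j, hj⟩ := cpow_pow hV t l
  rw [hj, smul_smul] at hc
  exact h k (t * l) (by simpa [ht] using hkl) _ hc

/-! ### Commutation factors of powers -/

lemma pow_mul_eq_smul {β : ℂ} (h : U * V = β • (V * U)) (k : ℕ) :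
    U ^ k * V = β ^ k • (V * U ^ k) := by
  induction k with
  | zero => simp
  | succ k ih =>
    rw [pow_succ, mul_assoc, h, mul_smul_comm, ← mul_assoc, ih, smul_mul_assoc, smul_smul,
      mul_assoc, ← pow_succ']

end

/-- Given disjoint maximal commuting classes C₁ = ⟨U₁,U₂⟩ and
C₂ = ⟨V₁,V₂⟩ with [U₁,V₁] = [U₂,V₂] = 0, [U₂,V₁] ≠ 0, and U₁V₂ = α V₂U₁ for a p-th
root of unity α ≠ 1, there is U₂′ ∈ C₁, independent of U₁ with C₁ = ⟨U₁,U₂′⟩, such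
that U₂′V₁ = α V₁U₂′. -/
theorem stmt14 (p : ℕ) [NeZero p] (hp : p.Prime)
    (U₁ U₂ V₁ V₂ : PauliMat p)
    (hU₁ : U₁ ∈ PauliSet p \ {1}) (hU₂ : U₂ ∈ PauliSet p \ {1})
    (hV₁ : V₁ ∈ PauliSet p \ {1}) (hV₂ : V₂ ∈ PauliSet p \ {1})
    (hUind : Indep p U₁ U₂) (hUc : Commute U₁ U₂)
    (hVind : Indep p V₁ V₂) (hVc : Commute V₁ V₂)
    (hC₁ : MaxCommClass p (genClass p U₁ U₂))
    (hC₂ : MaxCommClass p (genClass p V₁ V₂))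
    (hdisj : Disjoint (genClass p U₁ U₂) (genClass p V₁ V₂))
    (h11 : Commute U₁ V₁) (h22 : Commute U₂ V₂) (h21 : ¬ Commute U₂ V₁)
    (α : ℂ) (hα1 : α ≠ 1) (hαp : α ^ p = 1)
    (h12 : U₁ * V₂ = α • (V₂ * U₁)) :
    ∃ U₂' ∈ genClass p U₁ U₂,
      Indep p U₁ U₂' ∧ genClass p U₁ U₂' = genClass p U₁ U₂ ∧
      U₂' * V₁ = α • (V₁ * U₂') := by
  have : Fact p.Prime := ⟨hp⟩
  have hP : IsPauli p U₂ := .of_mem hU₂.1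
  obtain ⟨j, hj⟩ := phaseEq_comm hU₂.1 hV₁.1
  have hβ1 : omega_p p ^ j ≠ 1 := fun h => h21 (by rw [Commute, SemiconjBy, hj, h, one_smul])
  have hβp : (omega_p p ^ j) ^ p = 1 := by
    rw [← pow_mul, mul_comm, pow_mul, (omega_prim p).pow_eq_one, one_pow]
  have hβ : IsPrimitiveRoot (omega_p p ^ j) p := by
    have h := IsPrimitiveRoot.orderOf (omega_p p ^ j)
    rwa [orderOf_eq_prime hβp hβ1] at h
  obtain ⟨t, htp, rfl⟩ := hβ.eq_pow_of_pow_eq_one hαp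
  have hval : (t : ZMod p).val = t := ZMod.val_cast_of_lt htp
  have ht : (t : ZMod p) ≠ 0 := by
    intro h
    rw [h, ZMod.val_zero] at hval
    rw [← hval, pow_zero] at hα1
    exact hα1 rfl
  obtain ⟨hmem, hph⟩ := cpow_spec hP (t : ZMod p)
  refine ⟨cpow p U₂ t, ⟨0, t, by simpa using ht, (circ_cpow_zero (.of_mem hU₁.1) hmem).symm⟩,
    hUind.cpow_right hP ht, genClass_cpow hP ht, ?_⟩
  obtain ⟨i, hi⟩ := hph.symm
  rw [hval] at hi
  rw [hi, smul_mul_assoc, pow_mul_eq_smul hj, mul_smul_comm, smul_comm]
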